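/- arXiv:1212.3868 — 2 statements merged into one kernel-verified Lean document; each statement's English description precedes it below -/
import Mathlib

section
/- Let r > 0 and let N ≥ 0 be an integer. Suppose f : ℂ → ℂ is holomorphic on the open disk B_r(0) and that f and its complex derivatives f^{(1)}, …, f^{(N+1)} extend continuously to the closed disk {z : |z| ≤ r}. Then for every integer j ≥ N+1, (1/2π) ∫_0^{2π} f(r e^{iθ}) e^{−ijθ} dθ = r^{N+1} ((j−N−1)!/j!) · (1/2π) ∫_0^{2π} f^{(N+1)}(r e^{iθ}) e^{−i(j−N−1)θ} dθ; consequently |(1/2π) ∫_0^{2π} f(r e^{iθ}) e^{−ijθ} dθ| ≤ r^{N+1} ((j−N−1)!/j!) · sup_{|z|=r} |f^{(N+1)}(z)|. -/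
/-!
The heart of the matter is one integration by parts on the circle `|z| = r`. A function whose
derivative on the open disk extends continuously to the closed disk is differentiable, within the
closed disk, at boundary points as well, with the extended derivative
(`hasFDerivWithinAt_closure_of_tendsto_fderiv`, which rests on convexity of the disk). Hence
`θ ↦ G (r e^{iθ}) e^{-i(n+1)θ}` is a `C¹` function of period `2π`, and the integral of its derivative
vanishes; this says that the `(n+1)`-st Fourier coefficient of `G` is `r / (n+1)` times the `n`-th
coefficient of `G'` (`circle_coeff_succ`). Iterating gives the identity, and the bound follows by
estimating the integrand on the circle.
-/

open Metric in
/-- Up to the boundary, `G'` is the derivative of `G` within the closed disk. It is stated over `ℝ`,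
since it is to be composed with curves of a real parameter. -/
lemma hasFDerivWithinAt_closedBall_of_continuousOn {r : ℝ} (hr : 0 < r) {G G' : ℂ → ℂ}
    (hd : ∀ z ∈ ball (0:ℂ) r, HasDerivAt G (G' z) z)
    (hG : ContinuousOn G (closedBall (0:ℂ) r)) (hG' : ContinuousOn G' (closedBall (0:ℂ) r))
    {z : ℂ} (hz : z ∈ closedBall (0:ℂ) r) :
    HasFDerivWithinAt G ((ContinuousLinearMap.toSpanSingleton ℂ (G' z)).restrictScalars ℝ)
      (closedBall (0:ℂ) r) z := by
  have hcl : closure (ball (0:ℂ) r) = closedBall (0:ℂ) r := closure_ball 0 hr.ne'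
  have hfd : ∀ w ∈ ball (0:ℂ) r, HasFDerivAt G
      ((ContinuousLinearMap.toSpanSingleton ℂ (G' w)).restrictScalars ℝ) w :=
    fun w hw => (hd w hw).hasFDerivAt.restrictScalars ℝ
  rw [← hcl]
  refine hasFDerivWithinAt_closure_of_tendsto_fderiv
    (fun w hw => (hfd w hw).differentiableAt.differentiableWithinAt)
    (convex_ball _ _) isOpen_ball
    (fun w hw => (hG w (hcl ▸ hw)).mono ball_subset_closedBall) ?_
  have hlim : Filter.Tendsto G' (nhdsWithin z (ball (0:ℂ) r)) (nhds (G' z)) :=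
    (hG' z hz).mono ball_subset_closedBall
  have hΦ : Continuous fun a : ℂ =>
      (ContinuousLinearMap.toSpanSingleton ℂ a).restrictScalars ℝ :=
    (ContinuousLinearMap.restrictScalarsL ℂ ℂ ℂ ℝ ℝ).continuous.comp
      (ContinuousLinearMap.toSpanSingletonCLE (𝕜 := ℂ) (E := ℂ)).continuous
  refine ((hΦ.tendsto (G' z)).comp hlim).congr' ?_
  filter_upwards [self_mem_nhdsWithin] with w hw
  exact ((hfd w hw).fderiv).symm

lemma circle_mem_closedBall {r : ℝ} (hr : 0 < r) (θ : ℝ) :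
    (r * Complex.exp (θ * Complex.I) : ℂ) ∈ Metric.closedBall (0:ℂ) r := by
  simp [Complex.norm_exp_ofReal_mul_I, abs_of_pos hr]

lemma continuous_comp_circle {r : ℝ} (hr : 0 < r) {G : ℂ → ℂ}
    (hG : ContinuousOn G (Metric.closedBall (0:ℂ) r)) :
    Continuous fun θ : ℝ => G (r * Complex.exp (θ * Complex.I)) :=
  hG.comp_continuous (by fun_prop) (circle_mem_closedBall hr)

/-- Integration by parts: the boundary terms cancel by periodicity. -/
lemma circle_coeff_succ {r : ℝ} (hr : 0 < r) {G G' : ℂ → ℂ}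
    (hd : ∀ z ∈ Metric.ball (0:ℂ) r, HasDerivAt G (G' z) z)
    (hG : ContinuousOn G (Metric.closedBall (0:ℂ) r))
    (hG' : ContinuousOn G' (Metric.closedBall (0:ℂ) r)) (n : ℕ) :
    ((n : ℂ) + 1) * ∫ θ in (0:ℝ)..(2 * Real.pi),
        G (r * Complex.exp (θ * Complex.I)) * Complex.exp (-(((n + 1 : ℕ) : ℂ) * θ) * Complex.I) =
      r * ∫ θ in (0:ℝ)..(2 * Real.pi),
        G' (r * Complex.exp (θ * Complex.I)) * Complex.exp (-((n : ℂ) * θ) * Complex.I) := by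
  have hcG := continuous_comp_circle hr hG
  have hcG' := continuous_comp_circle hr hG'
  have hder : ∀ θ : ℝ, HasDerivAt (fun θ : ℝ => G (r * Complex.exp (θ * Complex.I)) *
        Complex.exp (-(((n + 1 : ℕ) : ℂ) * θ) * Complex.I))
      (Complex.I * (r * (G' (r * Complex.exp (θ * Complex.I)) *
          Complex.exp (-((n : ℂ) * θ) * Complex.I)) -
        ((n : ℂ) + 1) * (G (r * Complex.exp (θ * Complex.I)) *
          Complex.exp (-(((n + 1 : ℕ) : ℂ) * θ) * Complex.I)))) θ := by
    intro θ
    have hid : HasDerivAt (fun θ : ℝ => (θ : ℂ)) 1 θ := Complex.ofRealCLM.hasDerivAt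
    have hγ : HasDerivAt (fun θ : ℝ => (r * Complex.exp (θ * Complex.I) : ℂ))
        (r * (Complex.exp (θ * Complex.I) * (1 * Complex.I))) θ :=
      ((hid.mul_const Complex.I).cexp).const_mul _
    have he : HasDerivAt (fun θ : ℝ => Complex.exp (-(((n + 1 : ℕ) : ℂ) * θ) * Complex.I))
        (Complex.exp (-(((n + 1 : ℕ) : ℂ) * θ) * Complex.I) *
          (-(((n + 1 : ℕ) : ℂ) * 1) * Complex.I)) θ :=
      ((hid.const_mul _).neg.mul_const Complex.I).cexp
    have hGγ := (hasFDerivWithinAt_closedBall_of_continuousOn hr hd hG hG'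
      (circle_mem_closedBall hr θ)).comp_hasDerivAt θ hγ
        (Filter.Eventually.of_forall (circle_mem_closedBall hr))
    refine (hGγ.mul he).congr_deriv ?_
    have hexp : Complex.exp (-((n : ℂ) * θ) * Complex.I) = Complex.exp (θ * Complex.I) *
        Complex.exp (-(((n + 1 : ℕ) : ℂ) * θ) * Complex.I) := by
      rw [← Complex.exp_add]; congr 1; push_cast; ring
    rw [hexp]
    simp only [ContinuousLinearMap.coe_restrictScalars', ContinuousLinearMap.toSpanSingleton_apply,
      smul_eq_mul, Function.comp_apply]
    push_cast
    ring
  have hi : Continuous fun θ : ℝ => G (r * Complex.exp (θ * Complex.I)) *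
      Complex.exp (-(((n + 1 : ℕ) : ℂ) * θ) * Complex.I) := hcG.mul (by fun_prop)
  have hi' : Continuous fun θ : ℝ => G' (r * Complex.exp (θ * Complex.I)) *
      Complex.exp (-((n : ℂ) * θ) * Complex.I) := hcG'.mul (by fun_prop)
  have hint := intervalIntegral.integral_eq_sub_of_hasDerivAt (a := 0) (b := 2 * Real.pi)
    (fun θ _ => hder θ)
    ((continuous_const.mul ((continuous_const.mul hi').sub
      (continuous_const.mul hi))).intervalIntegrable _ _)
  have hper : Complex.exp (-(((n + 1 : ℕ) : ℂ) * ((2 * Real.pi : ℝ) : ℂ)) * Complex.I) = 1 := by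
    rw [Complex.exp_eq_one_iff]
    exact ⟨-((n + 1 : ℕ) : ℤ), by push_cast; ring⟩
  have hper' : Complex.exp (((2 * Real.pi : ℝ) : ℂ) * Complex.I) = 1 := by
    push_cast
    exact Complex.exp_two_pi_mul_I
  rw [intervalIntegral.integral_const_mul, intervalIntegral.integral_sub
    ((hi'.intervalIntegrable _ _).const_mul _) ((hi.intervalIntegrable _ _).const_mul _), intervalIntegral.integral_const_mul,
    intervalIntegral.integral_const_mul, hper, hper'] at hint
  simp only [Complex.ofReal_zero, zero_mul, mul_zero, neg_zero, Complex.exp_zero, sub_self,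
    mul_eq_zero, Complex.I_ne_zero, false_or] at hint
  exact (sub_eq_zero.mp hint).symm

lemma circle_coeff_iterate {r : ℝ} (hr : 0 < r) {N : ℕ} {F : ℕ → ℂ → ℂ}
    (hderiv : ∀ k ≤ N, ∀ z ∈ Metric.ball (0:ℂ) r, HasDerivAt (F k) (F (k + 1) z) z)
    (hcont : ∀ k ≤ N + 1, ContinuousOn (F k) (Metric.closedBall (0:ℂ) r))
    (m : ℕ) (hm : m ≤ N + 1) (n : ℕ) :
    ∫ θ in (0:ℝ)..(2 * Real.pi),
        F 0 (r * Complex.exp (θ * Complex.I)) *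
          Complex.exp (-(((n + m : ℕ) : ℂ) * θ) * Complex.I) =
      (r : ℂ) ^ m * ((Nat.factorial n : ℂ) / (Nat.factorial (n + m))) *
        ∫ θ in (0:ℝ)..(2 * Real.pi),
          F m (r * Complex.exp (θ * Complex.I)) * Complex.exp (-((n : ℂ) * θ) * Complex.I) := by
  induction m generalizing n with
  | zero =>
    have : (Nat.factorial n : ℂ) ≠ 0 := by exact_mod_cast n.factorial_ne_zero
    simp [this]
  | succ m ih =>
    have h1 := ih (by omega) (n + 1)
    have h2 := circle_coeff_succ hr (hderiv m (by omega)) (hcont m (by omega))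
      (hcont (m + 1) hm) n
    have e : n + (m + 1) = n + 1 + m := by omega
    rw [e, h1, Nat.factorial_succ n, pow_succ]
    push_cast at h2 ⊢
    linear_combination ((r : ℂ) ^ m * ((Nat.factorial n : ℂ) / (Nat.factorial (n + 1 + m)))) * h2

/-- A mean over the circle of `G` times a unimodular factor is at most the supremum of `‖G‖`, which
is a genuine supremum because the circle is compact. -/
lemma norm_circle_coeff_le {r : ℝ} (hr : 0 < r) {G : ℂ → ℂ}
    (hG : ContinuousOn G (Metric.closedBall (0:ℂ) r)) (n : ℕ) :
    ‖(1 / (2 * Real.pi) : ℂ) * ∫ θ in (0:ℝ)..(2 * Real.pi),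
        G (r * Complex.exp (θ * Complex.I)) * Complex.exp (-((n : ℂ) * θ) * Complex.I)‖ ≤
      ⨆ z : Metric.sphere (0:ℂ) r, ‖G z.1‖ := by
  have hbdd : BddAbove (Set.range fun z : Metric.sphere (0:ℂ) r => ‖G z.1‖) := by
    have h := (isCompact_sphere (0:ℂ) r).bddAbove_image
      (hG.mono Metric.sphere_subset_closedBall).norm
    rwa [Set.image_eq_range] at h
  have hle := intervalIntegral.norm_integral_le_of_norm_le_const (a := 0) (b := 2 * Real.pi)
    (f := fun θ : ℝ => G (r * Complex.exp (θ * Complex.I)) *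
      Complex.exp (-((n : ℂ) * θ) * Complex.I))
    (C := ⨆ z : Metric.sphere (0:ℂ) r, ‖G z.1‖) (by
      intro θ _
      have h1 : ‖Complex.exp (-((n : ℂ) * θ) * Complex.I)‖ = 1 := by
        have := Complex.norm_exp_ofReal_mul_I (-((n : ℝ) * θ))
        push_cast at this
        exact this
      rw [norm_mul, h1, mul_one]
      exact le_ciSup hbdd ⟨r * Complex.exp (θ * Complex.I), by
        simp [Complex.norm_exp_ofReal_mul_I, abs_of_pos hr]⟩)
  have hpi : 0 < 2 * Real.pi := Real.two_pi_pos
  have hn : ‖(1 / (2 * Real.pi) : ℂ)‖ = 1 / (2 * Real.pi) := by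
    simp [abs_of_pos Real.pi_pos]
  rw [norm_mul, hn, one_div, inv_mul_le_iff₀ hpi]
  rw [sub_zero, abs_of_pos hpi] at hle
  linarith


/-- Integration by parts for Fourier coefficients of a function holomorphic in a disk
whose derivatives up to order `N+1` extend continuously to the closed disk.
Here `F 0` is the function itself and `F (k+1)` is the complex derivative of `F k`. -/
theorem fourier_coefficient_holomorphic_decay
    (r : ℝ) (hr : 0 < r) (N : ℕ) (F : ℕ → ℂ → ℂ)
    (hderiv : ∀ k ≤ N, ∀ z ∈ Metric.ball (0:ℂ) r, HasDerivAt (F k) (F (k + 1) z) z)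
    (hcont : ∀ k ≤ N + 1, ContinuousOn (F k) (Metric.closedBall (0:ℂ) r)) :
    ∀ j : ℕ, N + 1 ≤ j →
      (1 / (2 * Real.pi) : ℂ) *
          ∫ θ in (0:ℝ)..(2 * Real.pi),
            F 0 (r * Complex.exp (θ * Complex.I)) * Complex.exp (-(j * θ) * Complex.I) =
        (r : ℂ) ^ (N + 1) *
          ((Nat.factorial (j - (N + 1)) : ℂ) / (Nat.factorial j)) *
          ((1 / (2 * Real.pi) : ℂ) *
            ∫ θ in (0:ℝ)..(2 * Real.pi),
              F (N + 1) (r * Complex.exp (θ * Complex.I)) *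
                Complex.exp (-(((j - (N + 1) : ℕ) : ℂ) * θ) * Complex.I)) ∧
      ‖(1 / (2 * Real.pi) : ℂ) *
          ∫ θ in (0:ℝ)..(2 * Real.pi),
            F 0 (r * Complex.exp (θ * Complex.I)) * Complex.exp (-(j * θ) * Complex.I)‖ ≤
        r ^ (N + 1) * ((Nat.factorial (j - (N + 1)) : ℝ) / (Nat.factorial j)) *
          ⨆ z : Metric.sphere (0:ℂ) r, ‖F (N + 1) z.1‖ := by
  intro j hj
  obtain ⟨n, rfl⟩ := Nat.exists_eq_add_of_le' hj
  rw [Nat.add_sub_cancel]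
  rw [circle_coeff_iterate hr hderiv hcont (N + 1) le_rfl n, mul_left_comm]
  refine ⟨rfl, ?_⟩
  rw [norm_mul]
  have hn : ‖(r : ℂ) ^ (N + 1) *
      ((Nat.factorial n : ℂ) / (Nat.factorial (n + (N + 1))))‖ =
      r ^ (N + 1) * ((Nat.factorial n : ℝ) / (Nat.factorial (n + (N + 1)))) := by
    simp only [norm_mul, norm_pow, norm_div, Complex.norm_natCast, Complex.norm_real,
      Real.norm_eq_abs, abs_of_pos hr]
  rw [hn]
  exact mul_le_mul_of_nonneg_left (norm_circle_coeff_le hr (hcont (N + 1) le_rfl) n)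
    (by positivity)
end

section
/- Let r > 0, let u : ℂ → ℂ be continuously differentiable (as a function of the two real variables x, y with z = x + iy) on a neighborhood of the circle {z : |z| = r}, and let l be a nonzero integer. Then (1/2π) ∫_0^{2π} u(r e^{iθ}) e^{−ilθ} dθ = (r/(2πl)) ∫_0^{2π} [ (∂u)(r e^{iθ}) e^{−i(l−1)θ} − (∂̄u)(r e^{iθ}) e^{−i(l+1)θ} ] dθ, where ∂u = ½(∂_x u − i ∂_y u) and ∂̄u = ½(∂_x u + i ∂_y u) are the Wirtinger derivatives of u. -/
/-!
Write `F θ = u (r e^{iθ}) e^{-ilθ}`. A real-linear map `L : ℂ → ℂ` decomposes as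
`L w = a w + b w̄`, with `a, b` the Wirtinger coefficients of `L`
(`fderiv_eq_wirtinger`); applied at `w = i r e^{iθ}` the chain rule gives
`F' = i (r (∂u e^{-i(l-1)θ} - ∂̄u e^{-i(l+1)θ}) - l F)`. Since `l` is an integer, `F` is
`2π`-periodic, so the integral of `F'` over a period vanishes, which is the claim after
dividing by `l ≠ 0`.
-/

/-- The Wirtinger derivative `∂u = ½(∂ₓu − i ∂_y u)` of `u : ℂ → ℂ`,
with the partial derivatives taken in the real coordinates `z = x + iy`. -/
noncomputable def wirtingerD (u : ℂ → ℂ) (z : ℂ) : ℂ :=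
  (1 / 2) * (fderiv ℝ u z 1 - Complex.I * fderiv ℝ u z Complex.I)

/-- The conjugate Wirtinger derivative `∂̄u = ½(∂ₓu + i ∂_y u)` of `u : ℂ → ℂ`. -/
noncomputable def wirtingerDBar (u : ℂ → ℂ) (z : ℂ) : ℂ :=
  (1 / 2) * (fderiv ℝ u z 1 + Complex.I * fderiv ℝ u z Complex.I)

/-- The differential in Wirtinger form: `du(w) = ∂u · w + ∂̄u · w̄`. -/
lemma fderiv_eq_wirtinger (u : ℂ → ℂ) (z w : ℂ) :
    fderiv ℝ u z w =
      wirtingerD u z * w + wirtingerDBar u z * (starRingEnd ℂ) w := by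
  have h : w = w.re • (1 : ℂ) + w.im • Complex.I := by
    simp
  have hL : fderiv ℝ u z w = w.re * fderiv ℝ u z 1 + w.im * fderiv ℝ u z Complex.I := by
    conv_lhs => rw [h, map_add, map_smul, map_smul]
    simp
  have hc : (starRingEnd ℂ) w = w.re - w.im * Complex.I := by
    apply Complex.ext <;> simp
  have hw : w = w.re + w.im * Complex.I := (Complex.re_add_im w).symm
  rw [hL, hc]
  conv_rhs => enter [1, 2]; rw [hw]
  unfold wirtingerD wirtingerDBar
  linear_combination (w.im : ℂ) * fderiv ℝ u z Complex.I * Complex.I_sq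

theorem fourier_coefficient_wirtinger_parts
    (r : ℝ) (hr : 0 < r) (u : ℂ → ℂ) (U : Set ℂ) (hU : IsOpen U)
    (hUs : Metric.sphere (0:ℂ) r ⊆ U) (hu : ContDiffOn ℝ 1 u U)
    (l : ℤ) (hl : l ≠ 0) :
    (1 / (2 * Real.pi) : ℂ) *
        ∫ θ in (0:ℝ)..(2 * Real.pi),
          u (r * Complex.exp (θ * Complex.I)) * Complex.exp (-(l * θ) * Complex.I) =
      ((r : ℂ) / (2 * Real.pi * l)) *
        ∫ θ in (0:ℝ)..(2 * Real.pi),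
          (wirtingerD u (r * Complex.exp (θ * Complex.I)) *
              Complex.exp (-((l - 1) * θ) * Complex.I) -
            wirtingerDBar u (r * Complex.exp (θ * Complex.I)) *
              Complex.exp (-((l + 1) * θ) * Complex.I)) := by
  set c : ℝ → ℂ := fun θ => r * Complex.exp (θ * Complex.I) with hc
  set F : ℝ → ℂ := fun θ => u (c θ) * Complex.exp (-(l * θ) * Complex.I) with hF
  set W : ℝ → ℂ := fun θ =>
    wirtingerD u (c θ) * Complex.exp (-((l - 1) * θ) * Complex.I) -
      wirtingerDBar u (c θ) * Complex.exp (-((l + 1) * θ) * Complex.I) with hW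
  change (1 / (2 * Real.pi) : ℂ) * ∫ θ in (0:ℝ)..(2 * Real.pi), F θ =
    ((r : ℂ) / (2 * Real.pi * l)) * ∫ θ in (0:ℝ)..(2 * Real.pi), W θ
  have hcU : ∀ θ, c θ ∈ U := fun θ => hUs (by
    simp [hc, Complex.norm_exp_ofReal_mul_I, abs_of_pos hr])
  have hcc : Continuous c := by fun_prop
  have hdu : Continuous fun θ => fderiv ℝ u (c θ) :=
    (hu.continuousOn_fderiv_of_isOpen hU le_rfl).comp_continuous hcc hcU
  have huc : Continuous fun θ => u (c θ) := hu.continuousOn.comp_continuous hcc hcU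
  have hFc : Continuous F := huc.mul (by fun_prop)
  have hWc : Continuous W := by
    simp only [hW, wirtingerD, wirtingerDBar]
    fun_prop
  have hcd : ∀ θ : ℝ, HasDerivAt c (r * (Complex.exp (θ * Complex.I) * Complex.I)) θ := by
    intro θ
    have h := ((((hasDerivAt_id θ).ofReal_comp).mul_const Complex.I).cexp).const_mul (r : ℂ)
    simpa using h
  have hed : ∀ θ : ℝ, HasDerivAt (fun θ : ℝ => Complex.exp (-(l * θ) * Complex.I))
      (Complex.exp (-(l * θ) * Complex.I) * (-l * Complex.I)) θ := by
    intro θ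
    have h := ((((((hasDerivAt_id θ).ofReal_comp).const_mul (l : ℂ)).neg).mul_const
      Complex.I).cexp)
    simpa using h
  have hFd : ∀ θ : ℝ, HasDerivAt F (Complex.I * (r * W θ - l * F θ)) θ := by
    intro θ
    have hud : HasFDerivAt u (fderiv ℝ u (c θ)) (c θ) :=
      ((hu.differentiableOn one_ne_zero).differentiableAt
        (hU.mem_nhds (hcU θ))).hasFDerivAt
    have h := (hud.comp_hasDerivAt θ (hcd θ)).mul (hed θ)
    refine h.congr_deriv ?_
    have hconj : (starRingEnd ℂ) (Complex.exp (θ * Complex.I)) =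
        Complex.exp (-(θ * Complex.I)) := by
      rw [← Complex.exp_conj]; simp
    have e1 : Complex.exp (-((l - 1) * θ) * Complex.I) =
        Complex.exp (θ * Complex.I) * Complex.exp (-(l * θ) * Complex.I) := by
      rw [← Complex.exp_add]; ring_nf
    have e2 : Complex.exp (-((l + 1) * θ) * Complex.I) =
        Complex.exp (-(θ * Complex.I)) * Complex.exp (-(l * θ) * Complex.I) := by
      rw [← Complex.exp_add]; ring_nf
    simp only [hF, hW, Function.comp, fderiv_eq_wirtinger, map_mul, Complex.conj_ofReal,
      Complex.conj_I, hconj, e1, e2]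
    ring
  have hper : F (2 * Real.pi) = F 0 := by
    have e1 : Complex.exp (-(l * (2 * Real.pi)) * Complex.I) = 1 := by
      rw [Complex.exp_eq_one_iff]
      exact ⟨-l, by push_cast; ring⟩
    rw [neg_mul] at e1
    simp [hF, hc, e1, Complex.exp_two_pi_mul_I]
  have hint : ∫ θ in (0:ℝ)..(2 * Real.pi), Complex.I * (r * W θ - l * F θ) = 0 := by
    rw [intervalIntegral.integral_eq_sub_of_hasDerivAt (fun θ _ => hFd θ)
      (Continuous.intervalIntegrable (by fun_prop) _ _), hper, sub_self]
  rw [intervalIntegral.integral_const_mul, intervalIntegral.integral_sub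
    (Continuous.intervalIntegrable (by fun_prop) _ _)
    (Continuous.intervalIntegrable (by fun_prop) _ _),
    intervalIntegral.integral_const_mul, intervalIntegral.integral_const_mul] at hint
  have key := (mul_eq_zero.mp hint).resolve_left Complex.I_ne_zero
  have hl' : (l : ℂ) ≠ 0 := by exact_mod_cast hl
  have hpi : (Real.pi : ℂ) ≠ 0 := by exact_mod_cast Real.pi_ne_zero
  field_simp
  linear_combination -key
end
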